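/- arXiv:1609.06288 — 7 statements merged into one kernel-verified Lean document; each statement's English description precedes it below -/
import Mathlib

section
/- Let A and B be two nontrivial, finitely generated groups. There exists no left-invariant linear order on the free product G = A * B whose positive cone is represented by a regular language; i.e., for every left-invariant linear order ≤ on G, every finite alphabet X, every surjective monoid homomorphism φ : X* → G, and every language L ⊆ X* with φ(L) = {g ∈ G : 1 < g}, the language L is not regular. -/
/-- The image in the group `G` of a language `L` over `X` under a monoid
homomorphism `φ : X* → G`. -/
def langImage {X G : Type} [Monoid G] (φ : FreeMonoid X →* G) (L : Language X) : Set G :=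
  (fun w => φ (FreeMonoid.ofList w)) '' L

theorem core_aux {X G : Type} [Group G] (φ : FreeMonoid X →* G) (E : Set G) :
    ∀ (w : List X) (y : G), y ∉ E → y * φ (FreeMonoid.ofList w) ∈ E →
      ∃ (u : List X) (x : X) (v : List X), w = u ++ x :: v ∧
        y * φ (FreeMonoid.ofList u) ∉ E ∧
        (y * φ (FreeMonoid.ofList u)) * φ (FreeMonoid.of x) ∈ E := by
  intro w
  induction w with
  | nil =>
    intro y hy h
    simp at h
    exact absurd h hy
  | cons x w ih =>
    intro y hy h
    rw [FreeMonoid.ofList_cons, map_mul, ← mul_assoc] at h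
    by_cases hx : y * φ (FreeMonoid.of x) ∈ E
    · exact ⟨[], x, w, rfl, by simpa using hy, by simpa using hx⟩
    · obtain ⟨u, x', v, rfl, h1, h2⟩ := ih _ hx h
      refine ⟨x :: u, x', v, rfl, ?_, ?_⟩
      · rw [FreeMonoid.ofList_cons, map_mul, ← mul_assoc]; exact h1
      · rw [FreeMonoid.ofList_cons, map_mul, ← mul_assoc]; exact h2

theorem core {X G : Type} [Group G] [LinearOrder G] [Fintype X]
    (hlin : ∀ h g g' : G, g ≤ g' → h * g ≤ h * g')
    (φ : FreeMonoid X →* G) (L : Language X)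
    (hL : langImage φ L = {g : G | 1 < g})
    (E : Set G) (a b : G) (ha : ∀ g ∈ E, a * g ∉ E) (hb : ∀ g, g ∉ E → b * g ∈ E)
    (hfin : ∀ s, {y : G | y ∉ E ∧ y * s ∈ E}.Finite) : ¬ L.IsRegular := by
  have hlt : ∀ h g g' : G, g < g' → h * g < h * g' := fun h g g' hg =>
    lt_of_le_of_ne (hlin h g g' hg.le) (fun e => hg.ne (mul_left_cancel e))
  obtain ⟨z, hz⟩ : ∃ z : G, 1 < z := by
    have ha1 : a ≠ 1 := by
      rintro rfl
      by_cases h1 : (1 : G) ∈ E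
      · exact ha _ h1 (by simpa using h1)
      · exact ha _ (hb _ h1) (by simpa using hb _ h1)
    rcases lt_or_gt_of_ne ha1 with h | h
    · exact ⟨a⁻¹, by simpa using hlt a⁻¹ _ _ h⟩
    · exact ⟨a, h⟩
  have nomax : ∀ g : G, ∃ g', g < g' := fun g => ⟨g * z, by simpa using hlt g _ _ hz⟩
  have cofin : ∀ M : G, (∃ p, M < p ∧ p ∉ E) ∧ (∃ k, M < k ∧ k ∈ E) := by
    intro M
    obtain ⟨g, hg⟩ := nomax (max M (max (a⁻¹ * M) (b⁻¹ * M)))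
    simp only [max_lt_iff] at hg
    obtain ⟨h1, h2, h3⟩ := hg
    have h2' := hlt a _ _ h2
    have h3' := hlt b _ _ h3
    rw [mul_inv_cancel_left] at h2' h3'
    by_cases hgE : g ∈ E
    · exact ⟨⟨a * g, h2', ha _ hgE⟩, ⟨g, h1, hgE⟩⟩
    · exact ⟨⟨g, h1, hgE⟩, ⟨b * g, h3', hb _ hgE⟩⟩
  rintro ⟨σ, _, D, rfl⟩
  have hV : ∀ q : σ, ∃ r : G, (∃ v, D.evalFrom q v ∈ D.accept) →
      ∃ v, D.evalFrom q v ∈ D.accept ∧ φ (FreeMonoid.ofList v) = r := by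
    intro q
    by_cases h : ∃ v, D.evalFrom q v ∈ D.accept
    · obtain ⟨v, hv⟩ := h
      exact ⟨_, fun _ => ⟨v, hv, rfl⟩⟩
    · exact ⟨1, fun h' => absurd h' h⟩
  choose V hV using hV
  have hF : (⋃ x : X, {y : G | y ∉ E ∧ y * φ (FreeMonoid.of x) ∈ E}).Finite :=
    Set.finite_iUnion fun x => hfin _
  have hT := hF.image2 (fun c r => c * r) (Set.finite_range V)
  have : Nonempty G := ⟨1⟩
  obtain ⟨M, hM⟩ := hT.bddAbove
  obtain ⟨p, hMp, hpE⟩ := (cofin M).1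
  obtain ⟨k, hpk, hkE⟩ := (cofin p).2
  have hpos : 1 < p⁻¹ * k := by simpa using hlt p⁻¹ _ _ hpk
  have hmem : p⁻¹ * k ∈ langImage φ D.accepts := by rw [hL]; exact hpos
  obtain ⟨w, hw, hwφ⟩ := hmem
  simp only at hwφ
  obtain ⟨u, x, v, rfl, h1, h2⟩ := core_aux φ E w p hpE (by rw [hwφ]; simpa using hkE)
  have hacc : D.evalFrom (D.eval u) (x :: v) ∈ D.accept := by
    have hw' : D.evalFrom D.start (u ++ x :: v) ∈ D.accept := hw
    rw [DFA.evalFrom_of_append] at hw'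
    exact hw'
  obtain ⟨v', hv', hr⟩ := hV _ ⟨_, hacc⟩
  have hpos' : φ (FreeMonoid.ofList (u ++ v')) ∈ langImage φ D.accepts := by
    refine ⟨u ++ v', ?_, rfl⟩
    change D.evalFrom D.start (u ++ v') ∈ D.accept
    rw [DFA.evalFrom_of_append]
    exact hv'
  rw [hL, FreeMonoid.ofList_append, map_mul, hr] at hpos'
  have h3 := hlt p _ _ hpos'
  rw [mul_one, ← mul_assoc] at h3
  have h4 : p * φ (FreeMonoid.ofList u) * V (D.eval u) ≤ M :=
    hM ⟨_, Set.mem_iUnion.2 ⟨x, h1, h2⟩, _, ⟨_, rfl⟩, rfl⟩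
  exact absurd (h3.trans_le h4) (not_lt.2 hMp.le)

section FirstIndex
open Monoid
open scoped Classical

variable {ι : Type} {M : ι → Type} [∀ i, Group (M i)]

noncomputable def ffst (g : CoprodI M) : Option ι := (CoprodI.Word.equiv g).fstIdx

theorem ffst_one : ffst (1 : CoprodI M) = none := by
  have : CoprodI.Word.equiv (1 : CoprodI M) = CoprodI.Word.empty := by
    exact CoprodI.Word.equiv.apply_symm_apply (CoprodI.Word.empty : CoprodI.Word M)
  rw [ffst, this]; rfl

theorem ffst_mul (g : CoprodI M) {i : ι} (m : M i) (hm : m ≠ 1) (hg : ffst g ≠ some i) :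
    ffst (CoprodI.of m * g) = some i := by
  have hg' : (CoprodI.Word.equiv g).fstIdx ≠ some i := hg
  have : CoprodI.Word.equiv (CoprodI.of m * g) =
      CoprodI.Word.cons m (CoprodI.Word.equiv g) hg' hm := by
    apply CoprodI.Word.equiv.symm.injective
    rw [Equiv.symm_apply_apply]
    change _ = CoprodI.Word.prod _
    rw [CoprodI.Word.prod_cons]
    congr 1
    exact (CoprodI.Word.equiv.symm_apply_apply g).symm
  rw [ffst, this, CoprodI.Word.fstIdx_cons]

theorem ffst_of {i : ι} (m : M i) (hm : m ≠ 1) : ffst (CoprodI.of m) = some i := by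
  simpa using ffst_mul 1 m hm (by rw [ffst_one]; simp)

theorem ffst_mul_of (g : CoprodI M) {j : ι} (s : M j) (hg : g ≠ 1) :
    ffst (g * CoprodI.of s) = ffst g ∨ ffst (g * CoprodI.of s) = none := by
  obtain ⟨w, rfl⟩ : ∃ w : CoprodI.Word M, w.prod = g :=
    ⟨CoprodI.Word.equiv g, CoprodI.Word.equiv.symm_apply_apply g⟩
  induction w using CoprodI.Word.consRecOn with
  | empty => simp at hg
  | cons i m w h1 h2 ih =>
    have hw : ffst w.prod = w.fstIdx := by
      rw [ffst]; congr 1; exact CoprodI.Word.equiv.apply_symm_apply w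
    rw [CoprodI.Word.prod_cons, mul_assoc, ffst_mul w.prod m h2 (by rwa [hw])]
    by_cases hw1 : w.prod = 1
    · rw [hw1, one_mul]
      by_cases hji : j = i
      · subst hji
        rw [← map_mul]
        by_cases hms : m * s = 1
        · right; rw [hms, map_one, ffst_one]
        · left; exact ffst_of _ hms
      · left
        apply ffst_mul _ _ h2
        by_cases hs : s = 1
        · rw [hs, map_one, ffst_one]; simp
        · rw [ffst_of _ hs]; simpa using hji
    · left
      apply ffst_mul _ _ h2
      rcases ih hw1 with h | h <;> rw [h]
      · rwa [hw]
      · simp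

end FirstIndex

def BFam (A B : Type) : Bool → Type
  | true => A
  | false => B

instance BFam.inst (A B : Type) [Group A] [Group B] : ∀ i, Group (BFam A B i)
  | true => inferInstanceAs (Group A)
  | false => inferInstanceAs (Group B)

def toI (A B : Type) [Group A] [Group B] :
    Monoid.Coprod A B →* Monoid.CoprodI (BFam A B) :=
  Monoid.Coprod.lift (Monoid.CoprodI.of (M := BFam A B) (i := true))
    (Monoid.CoprodI.of (M := BFam A B) (i := false))

def ofFam (A B : Type) [Group A] [Group B] : ∀ i, BFam A B i →* Monoid.Coprod A B
  | true => (Monoid.Coprod.inl : A →* Monoid.Coprod A B)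
  | false => (Monoid.Coprod.inr : B →* Monoid.Coprod A B)

theorem toI_inj (A B : Type) [Group A] [Group B] : Function.Injective (toI A B) := by
  have : (Monoid.CoprodI.lift (ofFam A B)).comp (toI A B) = MonoidHom.id _ := by
    apply Monoid.Coprod.hom_ext
    · ext x
      exact Monoid.CoprodI.lift_of (M := BFam A B) (ofFam A B) (i := true) x
    · ext x
      exact Monoid.CoprodI.lift_of (M := BFam A B) (ofFam A B) (i := false) x
  exact Function.LeftInverse.injective (fun x => DFunLike.congr_fun this x)

theorem exists_E (A B : Type) [Group A] [Group B] [Nontrivial A] [Nontrivial B] :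
    ∃ (E : Set (Monoid.Coprod A B)) (a b : Monoid.Coprod A B),
      (∀ g ∈ E, a * g ∉ E) ∧ (∀ g, g ∉ E → b * g ∈ E) ∧
      (∀ s, {y | y ∉ E ∧ y * s ∈ E}.Finite) := by
  obtain ⟨a, ha⟩ := exists_ne (1 : A)
  obtain ⟨b, hb⟩ := exists_ne (1 : B)
  have hl : ∀ x : A, toI A B (Monoid.Coprod.inl x) =
    Monoid.CoprodI.of (M := BFam A B) (i := true) x := fun x => rfl
  have hr : ∀ x : B, toI A B (Monoid.Coprod.inr x) =
    Monoid.CoprodI.of (M := BFam A B) (i := false) x := fun x => rfl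
  have key : ∀ (j : Bool) (s : BFam A B j) (t : Monoid.Coprod A B),
      toI A B t = Monoid.CoprodI.of s →
      {y | y ∉ {y | ffst (toI A B y) = some false} ∧
        y * t ∈ {y | ffst (toI A B y) = some false}}.Finite := by
    intro j s t ht
    apply (Set.finite_singleton (1 : Monoid.Coprod A B)).subset
    rintro y ⟨h1, h2⟩
    by_contra hy
    have hy' : toI A B y ≠ 1 := fun h => hy (toI_inj A B (by rw [h, map_one]))
    simp only [Set.mem_ofPred_eq, map_mul, ht] at h1 h2
    rcases ffst_mul_of _ s hy' with h | h
    · exact h1 (h ▸ h2)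
    · rw [h] at h2; simp at h2
  refine ⟨{y | ffst (toI A B y) = some false}, Monoid.Coprod.inl a, Monoid.Coprod.inr b,
    ?_, ?_, ?_⟩
  · intro g hg h
    simp only [Set.mem_ofPred_eq, map_mul, hl] at hg h
    rw [ffst_mul (M := BFam A B) (i := true) _ a ha (by rw [hg]; simp)] at h
    simp at h
  · intro g hg
    simp only [Set.mem_ofPred_eq, map_mul, hr] at hg ⊢
    exact ffst_mul (M := BFam A B) (i := false) _ b hb hg
  · intro s
    induction s using Monoid.Coprod.induction_on with
    | inl m => exact key true m _ (hl m)
    | inr n => exact key false n _ (hr n)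
    | mul x y hx hy =>
      refine (hx.union (hy.preimage (f := fun g => g * x)
        (mul_left_injective x).injOn)).subset ?_
      rintro g ⟨h1, h2⟩
      by_cases hgx : g * x ∈ {y | ffst (toI A B y) = some false}
      · exact Or.inl ⟨h1, hgx⟩
      · exact Or.inr ⟨hgx, by rwa [mul_assoc]⟩

/-- **No positive cone in a free product is regular.**
Let `A` and `B` be nontrivial, finitely generated groups.  For every left-invariant
linear order on `G = A ∗ B`, every finite alphabet `X`, every surjective monoid
homomorphism `φ : X* → G`, and every language `L ⊆ X*` representing the positive
cone `{g : 1 < g}`, the language `L` is not regular. -/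
theorem no_regular_positive_cone_in_free_product
    {A B : Type} [Group A] [Group B] [Nontrivial A] [Nontrivial B]
    (hA : Group.FG A) (hB : Group.FG B)
    (lin : LinearOrder (Monoid.Coprod A B))
    (hlin : ∀ h g g' : Monoid.Coprod A B, lin.le g g' → lin.le (h * g) (h * g'))
    {X : Type} [Fintype X]
    (φ : FreeMonoid X →* Monoid.Coprod A B) (hφ : Function.Surjective φ)
    (L : Language X)
    (hL : langImage φ L = {g : Monoid.Coprod A B | lin.lt 1 g}) :
    ¬ L.IsRegular := by
  obtain ⟨E, a, b, ha, hb, hfin⟩ := exists_E A B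
  exact @core X _ _ lin _ hlin φ L hL E a b ha hb hfin
end

section
/- Let A and B be two nontrivial, finitely generated groups. There exists no left-invariant linear order on the free product G = A * B whose positive cone {g ∈ G : 1 < g} is finitely generated as a subsemigroup of G. -/
namespace FPCone

open Monoid

section Words

variable {ι : Type} {M : ι → Type} [∀ i, Group (M i)] [DecidableEq ι] [∀ i, DecidableEq (M i)]

/-- index of the first letter of the normal form -/
def fi (x : CoprodI M) : Option ι := (CoprodI.Word.equiv x).fstIdx

theorem fi_prod (w : CoprodI.Word M) : fi w.prod = w.fstIdx := by
  have h : CoprodI.Word.equiv w.prod = w := CoprodI.Word.equiv.apply_symm_apply w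
  rw [fi, h]

theorem fi_one : fi (1 : CoprodI M) = none := by
  rw [← CoprodI.Word.prod_empty, fi_prod]; rfl

theorem fi_mul {i : ι} (m : M i) (hm : m ≠ 1) (x : CoprodI M) (hx : fi x ≠ some i) :
    fi (CoprodI.of m * x) = some i := by
  have h : (CoprodI.Word.equiv x).prod = x := CoprodI.Word.equiv.symm_apply_apply x
  have h2 := CoprodI.Word.prod_cons i m (CoprodI.Word.equiv x) hm hx
  rw [h] at h2
  rw [← h2, fi_prod]
  exact CoprodI.Word.fstIdx_cons _ _ _ _

theorem fi_of {i : ι} (m : M i) (hm : m ≠ 1) : fi (CoprodI.of m : CoprodI M) = some i := by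
  have := fi_mul m hm 1 (by simp [fi_one])
  simpa using this

theorem fi_mul_of {j : ι} (a : M j) (w : CoprodI.Word M) :
    (∃ c : M j, w.prod = CoprodI.of c) ∨ fi (w.prod * CoprodI.of a) = fi w.prod := by
  induction w using CoprodI.Word.consRecOn with
  | empty => left; exact ⟨1, by simp⟩
  | cons i m w h1 h2 ih =>
    have hw : fi w.prod ≠ some i := by rwa [fi_prod]
    rw [CoprodI.Word.prod_cons]
    rcases ih with ⟨c, hc⟩ | h
    · by_cases hij : i = j
      · subst hij
        left
        exact ⟨m * c, by rw [hc, map_mul]⟩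
      · right
        rw [fi_mul m h2 _ hw, mul_assoc, hc, ← map_mul]
        apply fi_mul m h2
        by_cases hca : c * a = 1
        · simp [hca, fi_one]
        · rw [fi_of _ hca]
          simpa using fun h => hij h.symm
    · right
      rw [fi_mul m h2 _ hw, mul_assoc]
      apply fi_mul m h2
      rwa [h]

theorem key {i j : ι} (a : M j) (x : CoprodI M)
    (h : ¬ (fi x = some i ↔ fi (x * CoprodI.of a) = some i)) :
    x = 1 ∨ x = CoprodI.of a⁻¹ := by
  have hx : (CoprodI.Word.equiv x).prod = x := CoprodI.Word.equiv.symm_apply_apply x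
  have h3 := fi_mul_of a (CoprodI.Word.equiv x)
  rw [hx] at h3
  rcases h3 with ⟨c, hc⟩ | h3
  · by_cases h1 : c = 1
    · left; simp [hc, h1]
    by_cases h2 : c * a = 1
    · right; rw [hc, eq_inv_of_mul_eq_one_left h2]
    · exfalso; apply h
      rw [hc, ← map_mul, fi_of _ h1, fi_of _ h2]
  · exact absurd (by rw [h3]) h

end Words

section Two

variable (A B : Type) [Group A] [Group B]

/-- the two factors as a family -/
def Fam : Bool → Type
  | true => A
  | false => B

instance instFam : ∀ i, Group (Fam A B i)
  | true => inferInstanceAs (Group A)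
  | false => inferInstanceAs (Group B)

def jA : A →* CoprodI (Fam A B) := CoprodI.of (M := Fam A B) (i := true)
def jB : B →* CoprodI (Fam A B) := CoprodI.of (M := Fam A B) (i := false)

def toI : Coprod A B →* CoprodI (Fam A B) := Coprod.lift (jA A B) (jB A B)

def famHom : ∀ i, Fam A B i →* Coprod A B
  | true => (Coprod.inl : A →* Coprod A B)
  | false => (Coprod.inr : B →* Coprod A B)

theorem toI_inj : Function.Injective (toI A B) := by
  have h : (CoprodI.lift (famHom A B)).comp (toI A B) = MonoidHom.id _ := by
    apply Coprod.hom_ext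
    · ext a
      exact CoprodI.lift_of (famHom A B) (i := true) a
    · ext b
      exact CoprodI.lift_of (famHom A B) (i := false) b
  exact Function.LeftInverse.injective (g := CoprodI.lift (famHom A B))
    fun x => DFunLike.congr_fun h x

theorem exists_W : ∃ W : Set (Coprod A B),
    (∀ g, {x | ¬ (x ∈ W ↔ x * g ∈ W)}.Finite) ∧
    (∀ b : B, b ≠ 1 → ∀ x ∈ W, Coprod.inr b * x ∉ W) ∧
    (∀ a : A, a ≠ 1 → ∀ x, x ∉ W → Coprod.inl a * x ∈ W) := by
  classical
  refine ⟨{x | fi (toI A B x) = some true}, ?_, ?_, ?_⟩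
  · intro g
    induction g using Coprod.induction_on with
    | inl a =>
      refine Set.Finite.subset (Set.Finite.preimage (toI_inj A B).injOn
        (Set.toFinite {1, jA A B a⁻¹})) ?_
      intro x hx
      have := key (M := Fam A B) (i := true) (j := true) a (toI A B x)
        (fun hc => hx (by
          show fi (toI A B x) = some true ↔ fi (toI A B (x * Coprod.inl a)) = some true
          rw [map_mul]; exact hc))
      exact this
    | inr b =>
      refine Set.Finite.subset (Set.Finite.preimage (toI_inj A B).injOn
        (Set.toFinite {1, jB A B b⁻¹})) ?_
      intro x hx
      have := key (M := Fam A B) (i := true) (j := false) b (toI A B x)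
        (fun hc => hx (by
          show fi (toI A B x) = some true ↔ fi (toI A B (x * Coprod.inr b)) = some true
          rw [map_mul]; exact hc))
      exact this
    | mul g h hg hh =>
      refine (hg.union (hh.preimage (mul_left_injective g).injOn)).subset ?_
      intro x hx
      simp only [Set.mem_setOf_eq, Set.mem_union, Set.mem_preimage] at hx ⊢
      rw [← mul_assoc] at hx
      tauto
  · intro b hb x hx hbx
    have h := fi_mul (M := Fam A B) (i := false) b hb (toI A B x) (by
      rw [show fi (toI A B x) = some true from hx]; simp)
    have h2 : fi (toI A B (Coprod.inr b * x)) = some true := hbx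
    rw [map_mul] at h2
    have h3 := h.symm.trans h2
    simp at h3
  · intro a ha x hx
    have h := fi_mul (M := Fam A B) (i := true) a ha (toI A B x) hx
    show fi (toI A B (Coprod.inl a * x)) = some true
    rw [map_mul]
    exact h

end Two

end FPCone


/-- **No positive cone in a free product is finitely generated as a semigroup.**
Let `A` and `B` be nontrivial, finitely generated groups.  For every left-invariant
linear order on `G = A ∗ B`, there is no finite subset `F` of the positive cone
`{g : 1 < g}` whose generated subsemigroup is the whole positive cone. -/
theorem no_finitely_generated_positive_cone_in_free_product
    {A B : Type} [Group A] [Group B] [Nontrivial A] [Nontrivial B]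
    (hA : Group.FG A) (hB : Group.FG B)
    (lin : LinearOrder (Monoid.Coprod A B))
    (hlin : ∀ h g g' : Monoid.Coprod A B, lin.le g g' → lin.le (h * g) (h * g')) :
    ¬ ∃ F : Finset (Monoid.Coprod A B),
        ((Subsemigroup.closure (F : Set (Monoid.Coprod A B)) :
            Subsemigroup (Monoid.Coprod A B)) : Set (Monoid.Coprod A B)) =
          {g : Monoid.Coprod A B | lin.lt 1 g} := by
  rintro ⟨F, hF⟩
  obtain ⟨W, hW, hWB, hWA⟩ := FPCone.exists_W A B
  obtain ⟨a, ha⟩ := exists_ne (1 : A)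
  obtain ⟨b, hb⟩ := exists_ne (1 : B)
  letI := lin
  have hle : ∀ h g g' : Monoid.Coprod A B, g ≤ g' → h * g ≤ h * g' := hlin
  have hlt : ∀ h g g' : Monoid.Coprod A B, g < g' → h * g < h * g' := fun h g g' hg =>
    lt_of_le_of_ne (hle h g g' hg.le) (fun e => hg.ne (mul_left_cancel e))
  have hpos : ∀ g : Monoid.Coprod A B, 1 < g ↔ g ∈ Subsemigroup.closure (F : Set (Monoid.Coprod A B)) := by
    intro g
    rw [← SetLike.mem_coe, hF]; rfl
  have hex : ∃ p : Monoid.Coprod A B, 1 < p := by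
    have hne : (Monoid.Coprod.inl a : Monoid.Coprod A B) ≠ 1 := fun h =>
      ha (Monoid.Coprod.inl_injective (h.trans (map_one _).symm))
    rcases lt_or_gt_of_ne hne with h | h
    · refine ⟨(Monoid.Coprod.inl a)⁻¹, ?_⟩
      have := hlt (Monoid.Coprod.inl a)⁻¹ _ _ h
      simpa only [inv_mul_cancel, mul_one] using this
    · exact ⟨_, h⟩
  obtain ⟨p, hp⟩ := hex
  have hE : (⋃ f ∈ F, {x | ¬ (x ∈ W ↔ x * f ∈ W)}).Finite :=
    Set.Finite.biUnion F.finite_toSet fun f _ => hW f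
  obtain ⟨M1, hM1⟩ : ∃ M1, ∀ x ∈ (⋃ f ∈ F, {x | ¬ (x ∈ W ↔ x * f ∈ W)}), x ≤ M1 := by
    haveI : Nonempty (Monoid.Coprod A B) := ⟨1⟩
    exact hE.bddAbove
  have hM0 : M1 < M1 * p := by simpa only [mul_one] using hlt M1 1 p hp
  generalize M1 * p = M0 at hM0
  have hstep : ∀ x, M0 ≤ x → ∀ f ∈ F, (x ∈ W ↔ x * f ∈ W) := by
    intro x hx f hf
    by_contra hc
    exact absurd (hM1 x (Set.mem_biUnion hf hc)) (not_le.mpr (hM0.trans_le hx))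
  have hcl : ∀ q ∈ Subsemigroup.closure (F : Set (Monoid.Coprod A B)),
      ∀ x, M0 ≤ x → (x ∈ W ↔ x * q ∈ W) := by
    intro q hq
    induction hq using Subsemigroup.closure_induction with
    | mem f hf => exact fun x hx => hstep x hx f hf
    | mul g h hg hh ihg ihh =>
      intro x hx
      have h1 : x ≤ x * g := by
        simpa only [mul_one] using hle x 1 g ((hpos g).2 hg).le
      rw [ihg x hx, ihh (x * g) (hx.trans h1), mul_assoc]
  have hconst : ∀ x, M0 ≤ x → (M0 ∈ W ↔ x ∈ W) := by
    intro x hx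
    rcases hx.eq_or_lt with rfl | hx
    · rfl
    have h1 : 1 < M0⁻¹ * x := by
      simpa only [inv_mul_cancel] using hlt M0⁻¹ _ _ hx
    have := hcl _ ((hpos _).1 h1) M0 le_rfl
    rwa [mul_inv_cancel_left] at this
  have hfix : ∀ g : Monoid.Coprod A B, ∃ x, (M0 ∈ W ↔ x ∈ W) ∧ (M0 ∈ W ↔ g * x ∈ W) := by
    intro g
    refine ⟨max M0 (g⁻¹ * M0), hconst _ (le_max_left _ _), hconst _ ?_⟩
    have := hle g _ _ (le_max_right M0 (g⁻¹ * M0))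
    rwa [mul_inv_cancel_left] at this
  by_cases hM : M0 ∈ W
  · obtain ⟨x, h1, h2⟩ := hfix (Monoid.Coprod.inr b)
    exact hWB b hb x (h1.1 hM) (h2.1 hM)
  · obtain ⟨x, h1, h2⟩ := hfix (Monoid.Coprod.inl a)
    exact hM (h2.2 (hWA a ha x (fun h => hM (h1.2 h))))
end

section
/- Let G be a finitely generated group with a left-invariant linear order ≤, let X be a finite alphabet, let φ : X* → G be a surjective monoid homomorphism, and let L ⊆ X* be a language with φ(L) = G₊ = {g ∈ G : 1 < g}. Let Pref(L) denote the set of all prefixes of words in L. If there exists a set T ⊆ G₊ of positive elements that is unbounded from above with respect to ≤ (i.e., for every g ∈ G there is t ∈ T with g < t) and such that T⁻¹ = {t⁻¹ : t ∈ T} ⊆ φ(Pref(L)), then L is not regular. -/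
/-- `Pref L`: the language of all prefixes of words in `L`. -/
def Pref {X : Type} (L : Language X) : Language X :=
  {u | ∃ v : List X, u ++ v ∈ L}

/-- If `(G, ≤)` is a finitely generated left-ordered group, `L` is a language
representing the positive cone, and there is a set `T` of positive elements,
unbounded from above, with `T⁻¹ ⊆ φ(Pref L)`, then `L` is not regular. -/
theorem not_regular_of_unbounded_inverses_in_prefixes
    {G : Type} [Group G] (hG : Group.FG G)
    (lin : LinearOrder G)
    (hlin : ∀ h g g' : G, lin.le g g' → lin.le (h * g) (h * g'))
    {X : Type} [Fintype X]
    (φ : FreeMonoid X →* G) (hφ : Function.Surjective φ)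
    (L : Language X)
    (hL : langImage φ L = {g : G | lin.lt 1 g})
    (T : Set G)
    (hTpos : T ⊆ {g : G | lin.lt 1 g})
    (hTunb : ∀ g : G, ∃ t ∈ T, lin.lt g t)
    (hTinv : (fun t : G => t⁻¹) '' T ⊆ langImage φ (Pref L)) :
    ¬ L.IsRegular := by
  rintro ⟨σ, _, M, hM⟩
  letI := lin
  classical
  let f : σ → G := fun q =>
    if h : ∃ v : List X, M.evalFrom q v ∈ M.accept then φ (FreeMonoid.ofList h.choose) else 1
  obtain ⟨g, hg⟩ := (Set.finite_range f).bddAbove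
  obtain ⟨t, htT, ht⟩ := hTunb g
  obtain ⟨u, ⟨v, hv⟩, hu⟩ := hTinv ⟨t, htT, rfl⟩
  have hmem : ∀ w : List X, u ++ w ∈ L ↔ M.evalFrom (M.eval u) w ∈ M.accept := by
    intro w
    rw [← hM, DFA.mem_accepts, DFA.eval, DFA.evalFrom_of_append]
  have h : ∃ v : List X, M.evalFrom (M.eval u) v ∈ M.accept := ⟨v, (hmem v).1 hv⟩
  have hf : f (M.eval u) = φ (FreeMonoid.ofList h.choose) := dif_pos h
  have hle : f (M.eval u) ≤ g := hg ⟨_, rfl⟩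
  have hin : u ++ h.choose ∈ L := (hmem _).2 h.choose_spec
  have hpos : φ (FreeMonoid.ofList (u ++ h.choose)) ∈ {g : G | lin.lt 1 g} := by
    rw [← hL]
    exact ⟨_, hin, rfl⟩
  rw [FreeMonoid.ofList_append, map_mul, ← hf] at hpos
  have hu' : φ (FreeMonoid.ofList u) = t⁻¹ := hu
  rw [hu'] at hpos
  have h1 : (1 : G) < t⁻¹ * f (M.eval u) := hpos
  have h2 := hlin t _ _ h1.le
  rw [mul_one, mul_inv_cancel_left] at h2
  have h3 : t ≤ f (M.eval u) := h2
  exact absurd (h3.trans hle) (not_le_of_gt ht)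
end

section
/- (Benois' Lemma) Let Y be a finite set, let X = Y ⊔ Y⁻¹ be the corresponding group alphabet, let G be a group, and let φ : X* → G be a surjective monoid homomorphism satisfying φ(x⁻¹) = φ(x)⁻¹ for all x ∈ X. If L ⊆ X* is a regular language with φ(L) = S ⊆ G, then the language L' consisting of the freely reduced forms of the words in L is a regular language contained in the set of freely reduced words over X, and φ(L') = S. -/
theorem benois_reg {Y : Type} [Fintype Y] [DecidableEq Y]
    (L : Language (Y × Bool)) (hreg : L.IsRegular) :
    Language.IsRegular ((FreeGroup.reduce '' L : Set (List (Y × Bool))) : Language (Y × Bool)) := by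
  obtain ⟨σ, _, M, rfl⟩ := hreg
  set L' : Language (Y × Bool) := FreeGroup.reduce '' M.accepts with hL'
  have hmem : ∀ w : List (Y × Bool), w ∈ L' ↔
      FreeGroup.IsReduced w ∧ ∃ u ∈ M.accepts, FreeGroup.Red u w := by
    intro w
    constructor
    · rintro ⟨u, hu, rfl⟩
      exact ⟨FreeGroup.IsReduced.of_reduce_eq FreeGroup.reduce.idem, u, hu, FreeGroup.reduce.red⟩
    · rintro ⟨hw, u, hu, h⟩
      exact ⟨u, hu, (FreeGroup.reduce.eq_of_red h).trans hw.reduce_eq⟩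
  rw [Language.isRegular_iff_finite_range_leftQuotient]
  let T : List (Y × Bool) → Set σ × Prop × Option (Y × Bool) := fun x =>
    ({s | ∃ u, FreeGroup.Red u x ∧ M.eval u = s}, FreeGroup.IsReduced x, x.getLast?)
  have hsub : ∀ x y, T x = T y → L'.leftQuotient x = L'.leftQuotient y := by
    have key : ∀ x y, T x = T y → ∀ v, x ++ v ∈ L' → y ++ v ∈ L' := by
      intro x y hxy v hv
      simp only [T, Prod.mk.injEq] at hxy
      obtain ⟨h1, h2, h3⟩ := hxy
      rw [hmem] at hv ⊢
      obtain ⟨hr, u, hu, hred⟩ := hv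
      obtain ⟨u₁, u₂, rfl, hu1, hu2⟩ := FreeGroup.Red.to_append_iff.1 hred
      have : M.eval u₁ ∈ {s | ∃ u, FreeGroup.Red u x ∧ M.eval u = s} := ⟨u₁, hu1, rfl⟩
      rw [h1] at this
      obtain ⟨u₃, hu3, he⟩ := this
      refine ⟨?_, u₃ ++ u₂, ?_, FreeGroup.Red.append_append hu3 hu2⟩
      · unfold FreeGroup.IsReduced at *
        rw [List.isChain_append] at hr ⊢
        rw [← h3, ← h2]
        exact hr
      · rw [DFA.mem_accepts] at hu ⊢
        unfold DFA.eval at *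
        rw [DFA.evalFrom_of_append] at hu ⊢
        rwa [he]
    intro x y h
    ext v
    exact ⟨key x y h v, key y x h.symm v⟩
  have hf : (Set.range T).Finite := Set.toFinite _
  have : Set.range L'.leftQuotient ⊆
      (fun t => L'.leftQuotient (Function.invFun T t)) '' Set.range T := by
    rintro _ ⟨x, rfl⟩
    exact ⟨T x, ⟨x, rfl⟩, hsub _ _ (Function.invFun_eq ⟨x, rfl⟩)⟩
  exact (hf.image _).subset this

theorem benois_lemma
    {Y : Type} [Fintype Y] [DecidableEq Y] {G : Type} [Group G]
    (φ : FreeMonoid (Y × Bool) →* G) (hφ : Function.Surjective φ)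
    (hinv : ∀ (y : Y) (b : Bool),
      φ (FreeMonoid.of (y, !b)) = (φ (FreeMonoid.of (y, b)))⁻¹)
    (L : Language (Y × Bool)) (hreg : L.IsRegular)
    (S : Set G) (hrep : langImage φ L = S) :
    Language.IsRegular ((FreeGroup.reduce '' L : Set (List (Y × Bool))) : Language (Y × Bool)) ∧
      (∀ w ∈ FreeGroup.reduce '' L, FreeGroup.reduce w = w) ∧
      langImage φ (FreeGroup.reduce '' L) = S := by
  refine ⟨benois_reg L hreg, ?_, ?_⟩
  · rintro _ ⟨u, _, rfl⟩
    exact FreeGroup.reduce.idem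
  · have hstep : ∀ u v : List (Y × Bool), FreeGroup.Red.Step u v →
        φ (FreeMonoid.ofList u) = φ (FreeMonoid.ofList v) := by
      rintro _ _ ⟨⟩
      rename_i L₁ L₂ x b
      have h := hinv x b
      simp only [FreeMonoid.ofList_append, FreeMonoid.ofList_cons, map_mul, h]
      group
    have hred : ∀ u v : List (Y × Bool), FreeGroup.Red u v →
        φ (FreeMonoid.ofList u) = φ (FreeMonoid.ofList v) := by
      intro u v h
      induction h with
      | refl => rfl
      | tail _ h ih => exact ih.trans (hstep _ _ h)
    rw [← hrep]
    unfold langImage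
    refine (Set.image_image _ _ _).trans ?_
    exact Set.image_congr fun u _ => (hred _ _ FreeGroup.reduce.red).symm
end

section
/- Let A and B be nontrivial groups generated by the images of finite sets Y_A and Y_B respectively, let G = A * B, let X = Y_A ⊔ Y_B ⊔ Y_A⁻¹ ⊔ Y_B⁻¹, and let φ : X* → G be a monoid homomorphism with φ(x⁻¹) = φ(x)⁻¹ for all x ∈ X. If w ∈ X* and φ(w) has reduced factorization φ(w) = a₁b₁⋯aₘbₘ in the free product A * B, then for every index i, each of the elements a₁b₁⋯aᵢ and a₁b₁⋯aᵢbᵢ of A * B is represented by some prefix of the word w; i.e., every truncation of the reduced factorization of φ(w) at a syllable boundary lies in φ(Pref({w})). -/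
/-- The element `a₁b₁⋯aₘbₘ` of the free product `A ∗ B` determined by a list of
pairs `[(a₁,b₁),…,(aₘ,bₘ)]`. -/
def altProd {A B : Type} [Group A] [Group B] (l : List (A × B)) : Monoid.Coprod A B :=
  (l.map fun p => Monoid.Coprod.inl p.1 * Monoid.Coprod.inr p.2).prod

/-- The list `[(a₁,b₁),…,(aₘ,bₘ)]` encodes a reduced factorization
`a₁b₁⋯aₘbₘ`: all `aᵢ` with `i ≥ 2` are nontrivial and all `bᵢ` with
`i ≤ m − 1` are nontrivial (while `a₁` and `bₘ` are arbitrary). -/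
def IsReducedFactorization {A B : Type} [Group A] [Group B] (l : List (A × B)) : Prop :=
  (∀ p ∈ l.tail, p.1 ≠ 1) ∧ (∀ p ∈ l.dropLast, p.2 ≠ 1)

open Monoid in
/-- `St b g`: `g` has a nonempty reduced form starting in `A` (`b = true`) or `B`. -/
inductive St {A B : Type} [Group A] [Group B] : Bool → Monoid.Coprod A B → Prop
  | sa (a : A) (h : a ≠ 1) : St true (Coprod.inl a)
  | sb (b : B) (h : b ≠ 1) : St false (Coprod.inr b)
  | ca (a : A) (h : a ≠ 1) (g : Monoid.Coprod A B) (hg : St false g) : St true (Coprod.inl a * g)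
  | cb (b : B) (h : b ≠ 1) (g : Monoid.Coprod A B) (hg : St true g) : St false (Coprod.inr b * g)

/-- Family of the two factors. -/
def Fam (A B : Type) : Bool → Type
  | true => A
  | false => B

instance famGroup (A B : Type) [Group A] [Group B] : (b : Bool) → Group (Fam A B b)
  | true => inferInstanceAs (Group A)
  | false => inferInstanceAs (Group B)

/-- Comparison map. -/
noncomputable def chi (A B : Type) [Group A] [Group B] :
    Monoid.Coprod A B →* Monoid.CoprodI (Fam A B) :=
  Monoid.Coprod.lift (Monoid.CoprodI.of (M := Fam A B) (i := true))
    (Monoid.CoprodI.of (M := Fam A B) (i := false))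

theorem chi_inl {A B : Type} [Group A] [Group B] (a : A) :
    chi A B (Monoid.Coprod.inl a) = Monoid.CoprodI.of (M := Fam A B) (i := true) a :=
  Monoid.Coprod.lift_apply_inl _ _ _

theorem chi_inr {A B : Type} [Group A] [Group B] (a : B) :
    chi A B (Monoid.Coprod.inr a) = Monoid.CoprodI.of (M := Fam A B) (i := false) a :=
  Monoid.Coprod.lift_apply_inr _ _ _

theorem St.neWord {A B : Type} [Group A] [Group B] {b : Bool} {g : Monoid.Coprod A B}
    (h : St b g) : ∃ (j : Bool) (w : Monoid.CoprodI.NeWord (Fam A B) b j), w.prod = chi A B g := by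
  induction h with
  | sa a h => exact ⟨true, .singleton (M := Fam A B) (i := true) a h, by
      rw [chi_inl]
      exact Monoid.CoprodI.NeWord.prod_singleton (M := Fam A B) (i := true) a h⟩
  | sb a h => exact ⟨false, .singleton (M := Fam A B) (i := false) a h, by
      rw [chi_inr]
      exact Monoid.CoprodI.NeWord.prod_singleton (M := Fam A B) (i := false) a h⟩
  | ca a h g hg ih =>
    obtain ⟨j, w, hw⟩ := ih
    exact ⟨j, .append (.singleton (M := Fam A B) (i := true) a h) (by decide) w, by
      rw [Monoid.CoprodI.NeWord.append_prod, hw, map_mul, chi_inl]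
      exact congrArg (· * chi A B g)
        (Monoid.CoprodI.NeWord.prod_singleton (M := Fam A B) (i := true) a h)⟩
  | cb a h g hg ih =>
    obtain ⟨j, w, hw⟩ := ih
    exact ⟨j, .append (.singleton (M := Fam A B) (i := false) a h) (by decide) w, by
      rw [Monoid.CoprodI.NeWord.append_prod, hw, map_mul, chi_inr]
      exact congrArg (· * chi A B g)
        (Monoid.CoprodI.NeWord.prod_singleton (M := Fam A B) (i := false) a h)⟩

theorem St.disj {A B : Type} [Group A] [Group B] {b : Bool} {g : Monoid.Coprod A B}
    (h : St b g) (h' : St (!b) g) : False := by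
  classical
  obtain ⟨j, w, hw⟩ := h.neWord
  obtain ⟨j', w', hw'⟩ := h'.neWord
  have e : w.toWord = w'.toWord := by
    apply Monoid.CoprodI.Word.equiv.symm.injective
    change w.prod = w'.prod
    rw [hw, hw']
  have e1 := congrArg (fun x => x.toList.head?) e
  simp only [Monoid.CoprodI.NeWord.toWord, Monoid.CoprodI.NeWord.toList_head?] at e1
  have := congrArg Sigma.fst (Option.some.inj e1)
  cases b <;> simp at this

theorem St.step {A B : Type} [Group A] [Group B] {b : Bool} {g : Monoid.Coprod A B}
    (h : St b g) (x : Monoid.Coprod A B)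
    (hx : (∃ a : A, x = Monoid.Coprod.inl a) ∨ (∃ a : B, x = Monoid.Coprod.inr a)) :
    g * x = 1 ∨ St b (g * x) := by
  by_cases hx1 : x = 1
  · subst hx1
    right
    simpa using h
  induction h with
  | sa a h =>
    rcases hx with ⟨c, rfl⟩ | ⟨c, rfl⟩
    · rw [← map_mul]
      by_cases hc : a * c = 1
      · left
        rw [hc, map_one]
      · exact Or.inr (St.sa _ hc)
    · exact Or.inr (St.ca _ h _ (St.sb _ (by rintro rfl; exact hx1 (map_one _))))
  | sb a h =>
    rcases hx with ⟨c, rfl⟩ | ⟨c, rfl⟩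
    · exact Or.inr (St.cb _ h _ (St.sa _ (by rintro rfl; exact hx1 (map_one _))))
    · rw [← map_mul]
      by_cases hc : a * c = 1
      · left
        rw [hc, map_one]
      · exact Or.inr (St.sb _ hc)
  | ca a h g hg ih =>
    right
    rw [mul_assoc]
    rcases ih with ih | ih
    · rw [ih, mul_one]
      exact St.sa _ h
    · exact St.ca _ h _ ih
  | cb a h g hg ih =>
    right
    rw [mul_assoc]
    rcases ih with ih | ih
    · rw [ih, mul_one]
      exact St.sb _ h
    · exact St.cb _ h _ ih

theorem St.path {A B X : Type} [Group A] [Group B] (φ : FreeMonoid X →* Monoid.Coprod A B)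
    (hφ : ∀ x, (∃ a : A, φ (FreeMonoid.of x) = Monoid.Coprod.inl a) ∨
      (∃ a : B, φ (FreeMonoid.of x) = Monoid.Coprod.inr a)) (w : List X) :
    ∀ {b : Bool} {h : Monoid.Coprod A B}, St b h →
    (∃ w' : List X, w' <+: w ∧ h * φ (FreeMonoid.ofList w') = 1) ∨
      St b (h * φ (FreeMonoid.ofList w)) := by
  induction w with
  | nil =>
    intro b h hh
    right
    simpa using hh
  | cons x w ih =>
    intro b h hh
    have key : ∀ w : List X, φ (FreeMonoid.ofList (x :: w)) =
        φ (FreeMonoid.of x) * φ (FreeMonoid.ofList w) := by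
      intro w
      rw [FreeMonoid.ofList_cons, map_mul]
    rcases hh.step _ (hφ x) with h1 | h1
    · left
      refine ⟨[x], by simp, ?_⟩
      rw [key]
      simpa using h1
    · rcases ih h1 with ⟨w', hw', e⟩ | h2
      · left
        refine ⟨x :: w', by simpa using hw', ?_⟩
        rw [key, ← mul_assoc, e]
      · right
        rw [key, ← mul_assoc]
        exact h2

theorem St.sep {A B X : Type} [Group A] [Group B] (φ : FreeMonoid X →* Monoid.Coprod A B)
    (hφ : ∀ x, (∃ a : A, φ (FreeMonoid.of x) = Monoid.Coprod.inl a) ∨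
      (∃ a : B, φ (FreeMonoid.of x) = Monoid.Coprod.inr a)) (w : List X)
    (b : Bool) (u v : Monoid.Coprod A B) (hw : φ (FreeMonoid.ofList w) = u * v)
    (hu : u = 1 ∨ St b u⁻¹) (hv : v = 1 ∨ St (!b) v) :
    ∃ w' : List X, w' <+: w ∧ φ (FreeMonoid.ofList w') = u := by
  rcases hu with rfl | hu
  · exact ⟨[], by simp, by simp⟩
  rcases hv with rfl | hv
  · exact ⟨w, by simp, by simpa using hw⟩
  rcases St.path φ hφ w hu with ⟨w', h1, h2⟩ | h
  · exact ⟨w', h1, (inv_mul_eq_one.1 h2).symm⟩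
  · rw [hw, inv_mul_cancel_left] at h
    exact (h.disj hv).elim

theorem altProd_cons {A B : Type} [Group A] [Group B] (p : A × B) (l : List (A × B)) :
    altProd (p :: l) = Monoid.Coprod.inl p.1 * (Monoid.Coprod.inr p.2 * altProd l) := by
  simp [altProd, mul_assoc]

theorem altProd_append {A B : Type} [Group A] [Group B] (l l' : List (A × B)) :
    altProd (l ++ l') = altProd l * altProd l' := by
  simp [altProd]

theorem altProd_nil {A B : Type} [Group A] [Group B] :
    altProd ([] : List (A × B)) = 1 := by
  simp [altProd]

theorem tail_St {A B : Type} [Group A] [Group B] (l : List (A × B))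
    (h1 : ∀ p ∈ l, p.1 ≠ 1) (h2 : ∀ p ∈ l.dropLast, p.2 ≠ 1) :
    altProd l = 1 ∨ St true (altProd l) := by
  induction l with
  | nil => exact Or.inl altProd_nil
  | cons p t ih =>
    right
    rw [altProd_cons]
    have hp := h1 p (by simp)
    rcases t with _ | ⟨q, t⟩
    · rw [altProd_nil, mul_one]
      by_cases hb : p.2 = 1
      · rw [hb, map_one, mul_one]
        exact St.sa _ hp
      · exact St.ca _ hp _ (St.sb _ hb)
    · have hb : p.2 ≠ 1 := h2 p (by simp)
      rcases ih (fun r hr => h1 r (List.mem_cons_of_mem _ hr))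
        (fun r hr => h2 r (by rw [List.dropLast_cons_cons]; exact List.mem_cons_of_mem _ hr)) with h | h
      · rw [h, mul_one]
        exact St.ca _ hp _ (St.sb _ hb)
      · exact St.ca _ hp _ (St.cb _ hb _ h)

theorem init_St {A B : Type} [Group A] [Group B] (l : List (A × B)) :
    ∀ (_ : ∀ p ∈ l.tail, p.1 ≠ 1) (_ : ∀ p ∈ l, p.2 ≠ 1) (a : A) (_ : l ≠ [] → a ≠ 1),
    altProd l * Monoid.Coprod.inl a = 1 ∨ St true (altProd l * Monoid.Coprod.inl a)⁻¹ := by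
  induction l using List.reverseRecOn with
  | nil =>
    intro _ _ a _
    rw [altProd_nil, one_mul]
    by_cases ha : a = 1
    · left
      rw [ha, map_one]
    · right
      rw [← map_inv]
      exact St.sa _ (inv_ne_one.2 ha)
  | append_singleton s p ih =>
    intro h1 h2 a ha
    right
    have ha := ha (by simp)
    have hb := h2 p (by simp)
    have e : (altProd (s ++ [p]) * Monoid.Coprod.inl a)⁻¹ =
        Monoid.Coprod.inl a⁻¹ * (Monoid.Coprod.inr p.2⁻¹ *
          (altProd s * Monoid.Coprod.inl p.1)⁻¹) := by
      rw [altProd_append, altProd_cons, altProd_nil, map_inv, map_inv]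
      group
    rw [e]
    rcases ih (fun r hr => h1 r (by rcases s with _ | ⟨q, s⟩ <;> simp_all))
      (fun r hr => h2 r (by simp [hr])) p.1
      (fun hs => h1 p (by rcases s with _ | ⟨q, s⟩ <;> simp_all)) with h | h
    · rw [h, inv_one, mul_one]
      exact St.ca _ (inv_ne_one.2 ha) _ (St.sb _ (inv_ne_one.2 hb))
    · exact St.ca _ (inv_ne_one.2 ha) _ (St.cb _ (inv_ne_one.2 hb) _ h)

/-- If `φ : X* → A ∗ B` (where `X = Y_A ⊔ Y_B ⊔ Y_A⁻¹ ⊔ Y_B⁻¹`, realized as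
`(Y_A ⊕ Y_B) × Bool`) respects formal inverses and sends the letters of `Y_A`,
`Y_B` to generators of `A`, `B`, and if `φ(w)` has reduced factorization
`a₁b₁⋯aₘbₘ`, then every truncation `a₁b₁⋯aᵢ` and `a₁b₁⋯aᵢbᵢ` of this
factorization at a syllable boundary is represented by a prefix of `w`. -/
theorem truncations_of_reduced_factorization_are_represented_by_prefixes
    {A B : Type} [Group A] [Group B] [Nontrivial A] [Nontrivial B]
    {YA YB : Type} [Fintype YA] [Fintype YB]
    (genA : YA → A) (genB : YB → B)
    (hgenA : Subgroup.closure (Set.range genA) = ⊤)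
    (hgenB : Subgroup.closure (Set.range genB) = ⊤)
    (φ : FreeMonoid ((YA ⊕ YB) × Bool) →* Monoid.Coprod A B)
    (hφA : ∀ y : YA, φ (FreeMonoid.of (Sum.inl y, true)) = Monoid.Coprod.inl (genA y))
    (hφB : ∀ y : YB, φ (FreeMonoid.of (Sum.inr y, true)) = Monoid.Coprod.inr (genB y))
    (hφinv : ∀ (s : YA ⊕ YB) (b : Bool),
      φ (FreeMonoid.of (s, !b)) = (φ (FreeMonoid.of (s, b)))⁻¹)
    (w : List ((YA ⊕ YB) × Bool)) (l : List (A × B))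
    (hl : IsReducedFactorization l)
    (hw : φ (FreeMonoid.ofList w) = altProd l) :
    ∀ (i : ℕ) (hi : i < l.length),
      (∃ w' : List ((YA ⊕ YB) × Bool), w' <+: w ∧
        φ (FreeMonoid.ofList w') =
          altProd (l.take i) * Monoid.Coprod.inl (l.get ⟨i, hi⟩).1) ∧
      (∃ w'' : List ((YA ⊕ YB) × Bool), w'' <+: w ∧
        φ (FreeMonoid.ofList w'') = altProd (l.take (i + 1))) := by
  intro i hi
  have hφ : ∀ x, (∃ a : A, φ (FreeMonoid.of x) = Monoid.Coprod.inl a) ∨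
      (∃ a : B, φ (FreeMonoid.of x) = Monoid.Coprod.inr a) := by
    rintro ⟨y | y, b⟩ <;> cases b
    · left
      refine ⟨(genA y)⁻¹, ?_⟩
      rw [map_inv, ← hφA]
      exact hφinv (Sum.inl y) true
    · exact Or.inl ⟨_, hφA y⟩
    · right
      refine ⟨(genB y)⁻¹, ?_⟩
      rw [map_inv, ← hφB]
      exact hφinv (Sum.inr y) true
    · exact Or.inr ⟨_, hφB y⟩
  obtain ⟨s, p, t, hs, rfl⟩ : ∃ s p t, s.length = i ∧ l = s ++ p :: t :=
    ⟨l.take i, l[i], l.drop (i + 1), by simp; omega, by simp⟩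
  obtain ⟨h1, h2⟩ := hl
  subst hs
  have e1 : (s ++ p :: t).take s.length = s := by simp
  have e2 : (s ++ p :: t).take (s.length + 1) = s ++ [p] := by simp [List.take_append]
  have e3 : (s ++ p :: t).get ⟨s.length, hi⟩ = p := by simp
  rw [e1, e2, e3]
  have hsA : ∀ r ∈ s.tail, r.1 ≠ 1 := fun r hr =>
    h1 r (by
        rcases s with _ | ⟨q, s⟩
        · simp at hr
        · exact List.mem_append_left _ hr)
  have hpA : s ≠ [] → p.1 ≠ 1 := fun hs =>
    h1 p (by
        rcases s with _ | ⟨q, s⟩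
        · exact absurd rfl hs
        · simp)
  have htA : ∀ r ∈ t, r.1 ≠ 1 := fun r hr =>
    h1 r (by
        rcases s with _ | ⟨q, s⟩
        · exact hr
        · simp [hr])
  have hd : (s ++ p :: t).dropLast = s ++ (p :: t).dropLast :=
    List.dropLast_append_of_ne_nil (by simp)
  rw [hd] at h2
  have hsB : ∀ r ∈ s, r.2 ≠ 1 := fun r hr => h2 r (by simp [hr])
  have hpB : t ≠ [] → p.2 ≠ 1 := fun ht => h2 p (by
    rcases t with _ | ⟨q, t⟩
    · exact absurd rfl ht
    · simp)
  have htB : ∀ r ∈ t.dropLast, r.2 ≠ 1 := fun r hr => h2 r (by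
    rcases t with _ | ⟨q, t⟩
    · simp at hr
    · rw [List.dropLast_cons_cons]
      exact List.mem_append_right _ (List.mem_cons_of_mem _ hr))
  have hU := init_St s hsA hsB p.1 hpA
  have hV := tail_St t htA htB
  have hw1 : φ (FreeMonoid.ofList w) = (altProd s * Monoid.Coprod.inl p.1) *
      (Monoid.Coprod.inr p.2 * altProd t) := by
    rw [hw, altProd_append, altProd_cons, mul_assoc]
  have e4 : altProd (s ++ [p]) = altProd s * Monoid.Coprod.inl p.1 * Monoid.Coprod.inr p.2 := by
    rw [altProd_append, altProd_cons, altProd_nil, mul_one, mul_assoc]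
  constructor
  · refine St.sep φ hφ w true _ _ hw1 hU ?_
    by_cases hb : p.2 = 1
    · left
      have ht : t = [] := by
        by_contra ht
        exact hpB ht hb
      rw [hb, ht, altProd_nil, map_one, mul_one]
    · right
      rcases hV with h | h
      · rw [h, mul_one]
        exact St.sb _ hb
      · exact St.cb _ hb _ h
  · by_cases ht : t = []
    · subst ht
      exact ⟨w, List.prefix_rfl, hw⟩
    have hb := hpB ht
    refine St.sep φ hφ w false _ (altProd t) ?_ ?_ hV
    · rw [hw1, e4, mul_assoc, mul_assoc, mul_assoc]
    · right
      rw [e4, mul_inv_rev, ← map_inv]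
      rcases hU with h | h
      · rw [h, inv_one, mul_one]
        exact St.sb _ (inv_ne_one.2 hb)
      · exact St.cb _ (inv_ne_one.2 hb) _ h
end

section
/- Let A and B be nontrivial groups generated by the images of finite sets Y_A and Y_B respectively, let G = A * B, let X = Y_A ⊔ Y_B ⊔ Y_A⁻¹ ⊔ Y_B⁻¹, and let φ : X* → G be a monoid homomorphism with φ(x⁻¹) = φ(x)⁻¹ for all x ∈ X whose image generates G. Then for every g ∈ G there exists a letter x ∈ X such that the syllable length of g·φ(x) is strictly greater than the syllable length of g. -/
/-- The number of syllables (nontrivial factors) of the factorization encoded by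
the list `[(a₁,b₁),…,(aₘ,bₘ)]`. -/
def syllableCount {A B : Type} [Group A] [Group B] [DecidableEq A] [DecidableEq B]
    (l : List (A × B)) : ℕ :=
  (l.map Prod.fst).countP (fun a => decide (a ≠ 1)) +
    (l.map Prod.snd).countP (fun b => decide (b ≠ 1))

theorem exists_gen_ne_one {A Y : Type} [Group A] [Nontrivial A] (f : Y → A)
    (h : Subgroup.closure (Set.range f) = ⊤) : ∃ y, f y ≠ 1 := by
  by_contra hc
  push Not at hc
  have h1 : Subgroup.closure (Set.range f) = ⊥ := by
    rw [Subgroup.closure_eq_bot_iff]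
    rintro _ ⟨y, rfl⟩
    simp [hc y]
  exact bot_ne_top (h1.symm.trans h)

/-- In a free product `G = A ∗ B` of nontrivial groups, with a group alphabet
`X = Y_A ⊔ Y_B ⊔ Y_A⁻¹ ⊔ Y_B⁻¹` mapping onto generators of `A` and `B`, for every
`g ∈ G` there is a letter `x ∈ X` such that the syllable length of `g·φ(x)` is
strictly greater than the syllable length of `g`. -/
theorem exists_letter_increasing_syllable_length
    {A B : Type} [Group A] [Group B] [Nontrivial A] [Nontrivial B]
    [DecidableEq A] [DecidableEq B]
    {YA YB : Type} [Fintype YA] [Fintype YB]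
    (genA : YA → A) (genB : YB → B)
    (hgenA : Subgroup.closure (Set.range genA) = ⊤)
    (hgenB : Subgroup.closure (Set.range genB) = ⊤)
    (φ : FreeMonoid ((YA ⊕ YB) × Bool) →* Monoid.Coprod A B)
    (hφA : ∀ y : YA, φ (FreeMonoid.of (Sum.inl y, true)) = Monoid.Coprod.inl (genA y))
    (hφB : ∀ y : YB, φ (FreeMonoid.of (Sum.inr y, true)) = Monoid.Coprod.inr (genB y))
    (hφinv : ∀ (s : YA ⊕ YB) (b : Bool),
      φ (FreeMonoid.of (s, !b)) = (φ (FreeMonoid.of (s, b)))⁻¹)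
    (g : Monoid.Coprod A B) (l : List (A × B))
    (hl : IsReducedFactorization l) (hlg : altProd l = g) :
    ∃ (x : (YA ⊕ YB) × Bool) (l' : List (A × B)),
      IsReducedFactorization l' ∧ altProd l' = g * φ (FreeMonoid.of x) ∧
        syllableCount l < syllableCount l' := by
  obtain ⟨ya, hya⟩ := exists_gen_ne_one genA hgenA
  obtain ⟨yb, hyb⟩ := exists_gen_ne_one genB hgenB
  subst hlg
  rcases List.eq_nil_or_concat l with rfl | ⟨L, ⟨a, b⟩, rfl⟩
  · refine ⟨(Sum.inl ya, true), [(genA ya, 1)], ?_, ?_, ?_⟩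
    · simp [IsReducedFactorization]
    · simp [altProd, hφA]
    · simp [syllableCount, hya]
  · rw [List.concat_eq_append] at *
    obtain ⟨h1, h2⟩ := hl
    by_cases hb : b = 1
    · subst hb
      refine ⟨(Sum.inr yb, true), L ++ [(a, genB yb)], ⟨?_, ?_⟩, ?_, ?_⟩
      · cases L with
        | nil => simp
        | cons c L =>
          intro p hp
          simp only [List.cons_append, List.tail_cons, List.mem_append, List.mem_singleton] at h1 hp
          rcases hp with hp | rfl
          · exact h1 p (Or.inl hp)
          · exact h1 (a, 1) (Or.inr rfl)
      · simpa using h2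
      · simp [altProd, hφB, mul_assoc]
      · simp [syllableCount, hyb]
        try omega
    · refine ⟨(Sum.inl ya, true), (L ++ [(a, b)]) ++ [(genA ya, 1)], ⟨?_, ?_⟩, ?_, ?_⟩
      · intro p hp
        rw [List.tail_append_of_ne_nil (by simp)] at hp
        rcases List.mem_append.1 hp with hp | hp
        · exact h1 p hp
        · rw [List.mem_singleton] at hp
          subst hp
          exact hya
      · intro p hp
        rw [List.dropLast_concat] at hp
        rw [List.dropLast_concat] at h2
        rcases List.mem_append.1 hp with hp | hp
        · exact h2 p hp
        · rw [List.mem_singleton] at hp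
          subst hp
          exact hb
      · simp [altProd, hφA, mul_assoc]
      · simp [syllableCount, List.countP_cons, hya]
        try omega
end

section
/- Let F be a free group of finite rank k ≥ 2. There exists no left-invariant linear order ≤ on F, finite alphabet X, surjective monoid homomorphism φ : X* → F, and regular language L ⊆ X* with φ(L) = {g ∈ F : 1 < g}. -/
namespace NoReg

open FreeGroup

/-- The elements whose reduced word starts with the letter `c`. -/
def Br {k : ℕ} (c : Fin k × Bool) (p : FreeGroup (Fin k)) : Prop := p.toWord.head? = some c

/-- The elements at which right multiplication by `t` crosses the border of the branch `c`. -/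
def Cross {k : ℕ} (c : Fin k × Bool) (t : FreeGroup (Fin k)) : Set (FreeGroup (Fin k)) :=
  {p | ¬ (Br c p ↔ Br c (p * t))}

lemma head_gen {k : ℕ} (i : Fin k) (p : FreeGroup (Fin k)) (h1 : p ≠ 1) (h2 : p ≠ (of i)⁻¹) :
    (p * of i).toWord.head? = p.toWord.head? := by
  have hr : IsReduced p.toWord := isReduced_toWord
  have hp : mk p.toWord = p := mk_toWord
  rcases List.eq_nil_or_concat p.toWord with h | ⟨w, c, h⟩
  · exact absurd (toWord_eq_nil_iff.1 h) h1
  · have h' : p.toWord = w ++ [c] := by simpa using h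
    rw [h'] at hr hp
    by_cases hc : c = (i, false)
    · subst hc
      have e : p * of i = mk w := by
        rw [← hp, show mk (w ++ [(i, false)]) = mk w * (of i)⁻¹ from by
          simp [of, inv_mk, invRev, mul_mk]]
        simp
      have hw : IsReduced w := hr.infix ⟨[], [(i, false)], by simp⟩
      rw [e, toWord_mk, hw.reduce_eq, h']
      cases w with
      | nil => exact absurd (by rw [← hp]; simp [of, inv_mk, invRev]) h2
      | cons a l => simp
    · have e : p * of i = mk (w ++ [c] ++ [(i, true)]) := by
        rw [← mul_mk, hp]; rfl
      have hw : IsReduced (w ++ [c] ++ [(i, true)]) := by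
        unfold FreeGroup.IsReduced at hr ⊢
        rw [List.isChain_append]
        refine ⟨hr, by simp, ?_⟩
        rintro x hx y hy
        simp at hx hy
        subst hx hy
        obtain ⟨a, b⟩ := c
        cases b <;> simp_all
      rw [e, toWord_mk, hw.reduce_eq, h']
      cases w <;> simp

lemma cross_inv {k : ℕ} (c : Fin k × Bool) (t : FreeGroup (Fin k)) (h : (Cross c t).Finite) :
    (Cross c t⁻¹).Finite := by
  refine (h.image (fun p => p * t)).subset ?_
  intro p hp
  refine ⟨p * t⁻¹, ?_, by simp⟩
  simp only [Cross, Set.mem_ofPred_eq, inv_mul_cancel_right] at hp ⊢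
  tauto

lemma cross_finite {k : ℕ} (c : Fin k × Bool) (t : FreeGroup (Fin k)) : (Cross c t).Finite := by
  have hof : ∀ i : Fin k, (Cross c (of i)).Finite := by
    intro i
    refine (Set.toFinite {1, (of i)⁻¹}).subset ?_
    intro p hp
    by_contra hn
    simp only [Set.mem_insert_iff, Set.mem_singleton_iff, not_or] at hn
    apply hp
    unfold Br
    rw [head_gen i p hn.1 hn.2]
  induction t using FreeGroup.induction_on with
  | C1 =>
    convert Set.finite_empty
    ext p
    simp [Cross]
  | of i => exact hof i
  | inv_of i _ => exact cross_inv c _ (hof i)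
  | mul x y hx hy =>
    refine (hx.union (hy.image (fun p => p * x⁻¹))).subset ?_
    intro p hp
    by_cases h : p ∈ Cross c x
    · exact Or.inl h
    · refine Or.inr ⟨p * x, ?_, by simp⟩
      simp only [Cross, Set.mem_ofPred_eq, mul_assoc] at hp h ⊢
      tauto

lemma not_br_mul {k : ℕ} (c : Fin k × Bool) (j : Fin k) (hj : j ≠ c.1) (p : FreeGroup (Fin k))
    (h : Br c p) : ¬ Br c (of j * p) := by
  unfold Br at *
  have hr : IsReduced p.toWord := isReduced_toWord
  obtain ⟨l, hl⟩ : ∃ l, p.toWord = c :: l := by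
    cases hw : p.toWord with
    | nil => simp [hw] at h
    | cons a l => simp [hw] at h; exact ⟨l, by rw [h]⟩
  have e : of j * p = mk ((j, true) :: c :: l) := by
    rw [← hl]; conv_lhs => rw [← mk_toWord (x := p)]
    rfl
  have hw : IsReduced ((j, true) :: c :: l) := by
    rw [hl] at hr
    unfold FreeGroup.IsReduced at hr ⊢
    rw [List.isChain_cons_cons]
    exact ⟨fun h => absurd h hj, hr⟩
  rw [e, toWord_mk, hw.reduce_eq]
  intro hh
  simp at hh
  exact hj (by rw [← hh])

lemma path {k : ℕ} {X : Type} (φ : FreeMonoid X →* FreeGroup (Fin k)) (A : FreeGroup (Fin k) → Prop)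
    (w : List X) : ∀ y, ¬ (A y ↔ A (y * φ (FreeMonoid.ofList w))) →
    ∃ u x v, w = u ++ x :: v ∧
      ¬ (A (y * φ (FreeMonoid.ofList u)) ↔ A (y * φ (FreeMonoid.ofList u) * φ (FreeMonoid.of x))) := by
  induction w with
  | nil => intro y h; simp at h
  | cons a w ih =>
    intro y h
    by_cases h0 : A y ↔ A (y * φ (FreeMonoid.of a))
    · obtain ⟨u, x, v, hw, hx⟩ := ih (y * φ (FreeMonoid.of a)) (by
        rw [FreeMonoid.ofList_cons, _root_.map_mul, ← mul_assoc] at h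
        tauto)
      refine ⟨a :: u, x, v, by simp [hw], ?_⟩
      rw [FreeMonoid.ofList_cons, _root_.map_mul, ← mul_assoc]
      exact hx
    · exact ⟨[], a, w, rfl, by simpa using h0⟩

end NoReg

open NoReg
/-- No positive cone of a left-invariant linear order on a free group of finite
rank `k ≥ 2` is represented by a regular language. -/
theorem no_regular_positive_cone_in_free_group
    {k : ℕ} (hk : 2 ≤ k) :
    ¬ ∃ (lin : LinearOrder (FreeGroup (Fin k)))
        (_ : ∀ h g g' : FreeGroup (Fin k), lin.le g g' → lin.le (h * g) (h * g'))
        (X : Type) (_ : Fintype X)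
        (φ : FreeMonoid X →* FreeGroup (Fin k)) (_ : Function.Surjective φ)
        (L : Language X), L.IsRegular ∧
          langImage φ L = {g : FreeGroup (Fin k) | lin.lt 1 g} := by
  rintro ⟨lin, hle, X, hX, φ, -, L, ⟨σ, hσ, M, rfl⟩, hL⟩
  letI := lin
  replace hle : ∀ h g g' : FreeGroup (Fin k), g ≤ g' → h * g ≤ h * g' := hle
  replace hL : langImage φ M.accepts = {g : FreeGroup (Fin k) | 1 < g} := hL
  have hlt : ∀ h g g' : FreeGroup (Fin k), g < g' → h * g < h * g' := fun h g g' hg =>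
    lt_of_le_of_ne (hle h g g' hg.le) (fun e => hg.ne (mul_left_cancel e))
  -- no maximum
  obtain ⟨q, hq⟩ : ∃ q : FreeGroup (Fin k), 1 < q := by
    rcases lt_trichotomy 1 (FreeGroup.of (⟨0, by omega⟩ : Fin k)) with h | h | h
    · exact ⟨_, h⟩
    · exact absurd h (FreeGroup.one_ne_of _)
    · exact ⟨(FreeGroup.of (⟨0, by omega⟩ : Fin k))⁻¹, by
        simpa using hlt (FreeGroup.of (⟨0, by omega⟩ : Fin k))⁻¹ _ _ h⟩
  have hmax : ∀ N : FreeGroup (Fin k), ∃ g, N < g := fun N => ⟨N * q, by simpa using hlt N _ _ hq⟩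
  have hout : ∀ (c : Fin k × Bool) (m : FreeGroup (Fin k)), ∃ h, m < h ∧ ¬ Br c h := by
    intro c m
    by_contra! hcon
    obtain ⟨j, hj⟩ : ∃ j : Fin k, j ≠ c.1 := by
      haveI : Nontrivial (Fin k) := Fin.nontrivial_iff_two_le.2 hk
      exact exists_ne c.1
    obtain ⟨g, hg⟩ := hmax (max m ((FreeGroup.of j)⁻¹ * m))
    have hb := hcon g (lt_of_le_of_lt (le_max_left _ _) hg)
    refine not_br_mul c j hj g hb (hcon _ ?_)
    simpa using hlt (FreeGroup.of j) _ _ (lt_of_le_of_lt (le_max_right _ _) hg)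
  -- completions
  have hv : ∀ s : σ, ∃ v : List X, (∃ v', M.evalFrom s v' ∈ M.accept) → M.evalFrom s v ∈ M.accept := by
    intro s
    by_cases h : ∃ v', M.evalFrom s v' ∈ M.accept
    · obtain ⟨v, hv⟩ := h; exact ⟨v, fun _ => hv⟩
    · exact ⟨[], fun h' => absurd h' h⟩
  choose v hv using hv
  let S : Set (FreeGroup (Fin k)) := insert 1 (⋃ c : Fin k × Bool, ⋃ x : X, ⋃ s : σ,
    (fun p => p * φ (FreeMonoid.ofList (v s))) '' Cross c (φ (FreeMonoid.of x)))
  have hS : S.Finite := by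
    refine Set.Finite.insert _ ?_
    refine Set.finite_iUnion fun c => Set.finite_iUnion fun x => Set.finite_iUnion fun s => ?_
    exact (cross_finite c _).image _
  obtain ⟨m, hm⟩ := hS.bddAbove
  have key : ∀ (c : Fin k × Bool) (y z : FreeGroup (Fin k)), m < y → y < z →
      ¬ (Br c y ↔ Br c z) → False := by
    intro c y z hy hyz hne
    have h1 : y⁻¹ * z ∈ langImage φ M.accepts := by
      rw [hL]; simpa using hlt y⁻¹ _ _ hyz
    obtain ⟨w, hw, hwz⟩ := h1
    simp only at hwz
    obtain ⟨u, x, r, rfl, hx⟩ := path φ (Br c) w y (by rw [hwz]; simpa using hne)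
    have hacc : M.evalFrom (M.eval u) (x :: r) ∈ M.accept := by
      have : M.eval (u ++ x :: r) ∈ M.accept := hw
      rwa [DFA.eval, DFA.evalFrom_of_append] at this
    have hacc2 := hv (M.eval u) ⟨_, hacc⟩
    have hpos : 1 < φ (FreeMonoid.ofList (u ++ v (M.eval u))) := by
      have : φ (FreeMonoid.ofList (u ++ v (M.eval u))) ∈ langImage φ M.accepts := by
        refine ⟨_, ?_, rfl⟩
        show M.eval (u ++ v (M.eval u)) ∈ M.accept
        rw [DFA.eval, DFA.evalFrom_of_append]
        exact hacc2
      rw [hL] at this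
      exact this
    have h2 := hlt y _ _ hpos
    rw [mul_one, FreeMonoid.ofList_append, map_mul, ← mul_assoc] at h2
    have h3 : y * φ (FreeMonoid.ofList u) * φ (FreeMonoid.ofList (v (M.eval u))) ∈ S := by
      refine Set.mem_insert_of_mem _ ?_
      simp only [Set.mem_iUnion]
      exact ⟨c, x, M.eval u, _, hx, rfl⟩
    exact absurd (hm h3) (not_le.2 (hy.trans h2))
  obtain ⟨g, hg⟩ := hmax m
  have hg1 : g ≠ 1 := ((hm (Set.mem_insert _ _)).trans_lt hg).ne'
  obtain ⟨c, hc⟩ : ∃ c, Br c g := by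
    unfold Br
    cases hw : g.toWord with
    | nil => exact absurd (FreeGroup.toWord_eq_nil_iff.1 hw) hg1
    | cons a l => exact ⟨a, rfl⟩
  obtain ⟨h, hh, hhc⟩ := hout c m
  rcases lt_trichotomy g h with hgh | hgh | hgh
  · exact key c g h hg hgh (by tauto)
  · exact hhc (hgh ▸ hc)
  · exact key c h g hh hgh (by tauto)
end
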